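/- Fix an integer k ≥ 0. Let X be a finite clique complex such that every strongly connected, pure (k+1)-dimensional subcomplex S ⊆ X contains at least one vertex v with deg_S(v) ≤ 2k+1. Then X is (k+1)-collapsible. -/

import Mathlib

open Finset

/-! Basic definitions for finite abstract simplicial complexes, viewed as
downward-closed families of nonempty finite sets of vertices. -/

variable {V : Type*} [DecidableEq V]

/-- `K` is an abstract simplicial complex: every face is nonempty, and `K` is
closed under taking nonempty subsets. -/
def IsComplex (K : Set (Finset V)) : Prop :=
  (∀ σ ∈ K, σ.Nonempty) ∧ ∀ σ ∈ K, ∀ τ : Finset V, τ ⊆ σ → τ.Nonempty → τ ∈ K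

/-- `τ` is a maximal face (facet) of `K`. -/
def IsMaximalFace (K : Set (Finset V)) (τ : Finset V) : Prop :=
  τ ∈ K ∧ ∀ η ∈ K, τ ⊆ η → η = τ

/-- `σ` is a free face of the maximal face `τ` in `K`: `σ ⊊ τ`, `τ` is maximal,
and `τ` is the only maximal face of `K` containing `σ`. -/
def IsFreeFace (K : Set (Finset V)) (σ τ : Finset V) : Prop :=
  σ ∈ K ∧ IsMaximalFace K τ ∧ σ ⊂ τ ∧
    ∀ η : Finset V, IsMaximalFace K η → σ ⊆ η → η = τ

/-- One simplicial collapse: remove all faces `η` with `σ ⊆ η ⊆ τ`, where `σ` is a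
free face of `τ`. -/
def CollapseStep (K K' : Set (Finset V)) : Prop :=
  ∃ σ τ : Finset V, IsFreeFace K σ τ ∧ K' = K \ {η | σ ⊆ η ∧ η ⊆ τ}

/-- `K` collapses to `K'` by a finite sequence of simplicial collapses. -/
def CollapsesTo (K K' : Set (Finset V)) : Prop :=
  Relation.ReflTransGen CollapseStep K K'

/-- `K` is `k`-collapsible: it collapses to a complex of dimension at most `k - 1`,
i.e. in which every face has at most `k` vertices. -/
def Collapsible (k : ℕ) (K : Set (Finset V)) : Prop :=
  ∃ K' : Set (Finset V), CollapsesTo K K' ∧ ∀ σ ∈ K', σ.card ≤ k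

/-- `K` is a clique (flag) complex: it is a simplicial complex, and any nonempty
finite vertex set whose 1-skeleton (vertices and edges) lies in `K` is a face of `K`. -/
def IsCliqueComplex (K : Set (Finset V)) : Prop :=
  IsComplex K ∧ ∀ σ : Finset V, σ.Nonempty →
    (∀ τ : Finset V, τ ⊆ σ → τ.Nonempty → τ.card ≤ 2 → τ ∈ K) → σ ∈ K

/-- The flag closure of `S`: add every simplex whose 1-skeleton lies in `S`;
equivalently, the clique complex of the 1-skeleton of `S`. -/
def flagClosure (S : Set (Finset V)) : Set (Finset V) :=
  S ∪ {σ : Finset V | σ.Nonempty ∧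
    ∀ τ : Finset V, τ ⊆ σ → τ.Nonempty → τ.card ≤ 2 → τ ∈ S}

/-- `S` is pure `d`-dimensional: it is nonempty and all its maximal faces have
dimension `d` (i.e. `d + 1` vertices). -/
def IsPure (S : Set (Finset V)) (d : ℕ) : Prop :=
  S.Nonempty ∧ ∀ τ : Finset V, IsMaximalFace S τ → τ.card = d + 1

/-- Two `d`-dimensional faces of `S` are adjacent if they share a `(d-1)`-dimensional face. -/
def FacetAdj (S : Set (Finset V)) (d : ℕ) (σ τ : Finset V) : Prop :=
  σ ∈ S ∧ τ ∈ S ∧ σ.card = d + 1 ∧ τ.card = d + 1 ∧ (σ ∩ τ).card = d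

/-- A pure `d`-dimensional complex is strongly connected if any two `d`-faces are
joined by a chain of `d`-faces in which consecutive faces share a `(d-1)`-face. -/
def StronglyConnected (S : Set (Finset V)) (d : ℕ) : Prop :=
  ∀ σ ∈ S, ∀ τ ∈ S, σ.card = d + 1 → τ.card = d + 1 →
    Relation.ReflTransGen (FacetAdj S d) σ τ

/-- A relevant `d`-subcomplex of `X`: a subcomplex that is pure `d`-dimensional
and strongly connected. -/
def IsRelevant (X S : Set (Finset V)) (d : ℕ) : Prop :=
  S ⊆ X ∧ IsComplex S ∧ IsPure S d ∧ StronglyConnected S d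

/-- A maximal relevant `d`-subcomplex of `X`: a relevant `d`-subcomplex not properly
contained in any other relevant `d`-subcomplex of `X`. -/
def IsMaxRelevant (X S : Set (Finset V)) (d : ℕ) : Prop :=
  IsRelevant X S d ∧ ∀ T : Set (Finset V), IsRelevant X T d → S ⊆ T → T = S

/-- The degree of a vertex `v` in `S`: the number of vertices adjacent to `v`
in the 1-skeleton of `S`. -/
noncomputable def degreeIn (S : Set (Finset V)) (v : V) : ℕ :=
  {w : V | w ≠ v ∧ ({v, w} : Finset V) ∈ S}.ncard

/-- The link of a vertex `v` in `K`. -/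
def link (K : Set (Finset V)) (v : V) : Set (Finset V) :=
  {σ : Finset V | σ ∈ K ∧ v ∉ σ ∧ insert v σ ∈ K}

/-- The star of a face `σ` in `K`. -/
def star (K : Set (Finset V)) (σ : Finset V) : Set (Finset V) :=
  {τ ∈ K | σ ⊆ τ}

/-- The vertex support of `S`. -/
def vsupp (S : Set (Finset V)) : Set V := {v : V | ∃ σ ∈ S, v ∈ σ}

/-!
Collapsing faces of cardinality at least `k + 1` is a local operation: a family of faces collapses
as soon as each of its parts that are closed under comparability in that range does. A part that
cannot be split further has strongly connected top-dimensional skeleton in dimension `k + 1`, so it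
has a vertex `v` with at most `2 * k + 1` neighbours. Up to faces too small to matter, the link
of `v` consists of components of the clique complex on these neighbours, and a clique complex on at
most `2 * k + 1` vertices is `k`-collapsible: it is a simplex, or deleting a vertex that misses some
other vertex leaves a link on at most `2 * (k - 1) + 1` vertices. Hence the star of `v` collapses,
and the deletion of `v` is again a part of a clique complex satisfying the degree condition.
-/

section SetFamilies

variable {α : Type*} {d : ℕ} {A B : Set (Finset α)}

/-- Collapsibility of a family of finite sets that need not be a complex: the members of cardinality
more than `d` can be removed by successive collapses. Unlike in `Collapsible d`, a collapse may only
start from a set `σ` of cardinality at least `d`; this makes the members of cardinality less than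
`d` irrelevant, so that the notion is compatible with cutting a family into pieces. -/
inductive FamilyCollapsible (d : ℕ) : Set (Finset α) → Prop
  | of_card_le {A : Set (Finset α)} (hA : ∀ σ ∈ A, #σ ≤ d) : FamilyCollapsible d A
  | of_sdiff {A : Set (Finset α)} {σ τ : Finset α} (hσ : σ ∈ A) (hτ : τ ∈ A) (hστ : σ ⊂ τ)
      (hd : d ≤ #σ) (hfree : ∀ η ∈ A, σ ⊆ η → η ⊆ τ)
      (h : FamilyCollapsible d (A \ {η | σ ⊆ η})) : FamilyCollapsible d A

/-- `A` is closed under comparability among the members of `X` of cardinality at least `d`, i.e. in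
that range it is a union of connected components of the poset `X`. -/
def IsComparabilityClosed (d : ℕ) (X A : Set (Finset α)) : Prop :=
  ∀ σ ∈ X, ∀ τ ∈ X, σ ⊆ τ → d ≤ #σ → (σ ∈ A ↔ τ ∈ A)

/-- The link of `v` in a family `A`, as in `link` but without requiring its members to be in `A`, so
that it determines the star of `v` for families that are not complexes. -/
def familyLink [DecidableEq α] (A : Set (Finset α)) (v : α) : Set (Finset α) :=
  {σ | v ∉ σ ∧ insert v σ ∈ A}

theorem IsComparabilityClosed.mono {X Y : Set (Finset α)} (hA : IsComparabilityClosed d X A)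
    (hYX : Y ⊆ X) : IsComparabilityClosed d Y A :=
  fun σ hσ τ hτ => hA σ (hYX hσ) τ (hYX hτ)

theorem IsComparabilityClosed.sdiff {X : Set (Finset α)} (hA : IsComparabilityClosed d X A)
    (hB : IsComparabilityClosed d X B) : IsComparabilityClosed d X (A \ B) :=
  fun σ hσ τ hτ hστ hd => and_congr (hA σ hσ τ hτ hστ hd) (not_congr (hB σ hσ τ hτ hστ hd))

theorem isComparabilityClosed_self (d : ℕ) (X : Set (Finset α)) : IsComparabilityClosed d X X :=
  fun _ hσ _ hτ _ _ => iff_of_true hσ hτ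

theorem FamilyCollapsible.collapsible (h : FamilyCollapsible d A) : Collapsible d A := by
  induction h with
  | of_card_le hA => exact ⟨_, Relation.ReflTransGen.refl, hA⟩
  | @of_sdiff A σ τ hσ hτ hστ _ hfree _ ih =>
    obtain ⟨K, hK, hcard⟩ := ih
    refine ⟨K, hK.head ⟨σ, τ, ⟨hσ, ⟨hτ, ?_⟩, hστ, ?_⟩, ?_⟩, hcard⟩
    · exact fun η hη hτη => (hfree η hη (hστ.subset.trans hτη)).antisymm hτη
    · exact fun η hη hση => (hη.2 τ hτ (hfree η hη.1 hση)).symm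
    · ext η
      exact and_congr_right fun hη => not_congr (iff_self_and.2 (hfree η hη))

theorem FamilyCollapsible.of_isComparabilityClosed (hA : FamilyCollapsible d A)
    (hclosed : IsComparabilityClosed d A B) (hlarge : ∀ σ ∈ B, d < #σ → σ ∈ A) :
    FamilyCollapsible d B := by
  induction hA generalizing B with
  | of_card_le hA =>
    exact .of_card_le fun σ hσ => not_lt.1 fun hd => hd.not_ge (hA σ (hlarge σ hσ hd))
  | @of_sdiff A σ τ hσ hτ hστ hd hfree _ ih =>
    have eq_or_mem : ∀ η ∈ B, σ ⊆ η → η = σ ∨ η ∈ A := fun η hη hση =>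
      hση.eq_or_ssubset.imp Eq.symm fun hlt => hlarge η hη (hd.trans_lt (card_lt_card hlt))
    by_cases hσB : σ ∈ B
    · refine .of_sdiff hσB ((hclosed σ hσ τ hτ hστ.subset hd).1 hσB) hστ hd ?_ (ih ?_ ?_)
      · rintro η hη hση
        obtain rfl | hηA := eq_or_mem η hη hση
        exacts [hστ.subset, hfree η hηA hση]
      · exact fun ρ hρ η hη hρη hcard =>
          and_congr (hclosed ρ hρ.1 η hη.1 hρη hcard) (iff_of_true hρ.2 hη.2)
      · exact fun η hη hcard => ⟨hlarge η hη.1 hcard, hη.2⟩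
    · refine ih (hclosed.mono Set.sdiff_subset) fun η hη hcard => ⟨hlarge η hη hcard, fun hση => ?_⟩
      exact hσB ((hclosed σ hσ η (hlarge η hη hcard) hση hd).2 hη)

theorem FamilyCollapsible.of_subset (hA : FamilyCollapsible d A) (hAB : A ⊆ B)
    (hlarge : ∀ σ ∈ B, d < #σ → σ ∈ A) : FamilyCollapsible d B :=
  hA.of_isComparabilityClosed ((isComparabilityClosed_self d B).mono hAB) hlarge

theorem FamilyCollapsible.of_upperClosed_of_sdiff (hB : FamilyCollapsible d B) (hBA : B ⊆ A)
    (hupper : ∀ σ ∈ B, ∀ τ ∈ A, σ ⊆ τ → d ≤ #σ → τ ∈ B) (hdiff : FamilyCollapsible d (A \ B)) :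
    FamilyCollapsible d A := by
  induction hB generalizing A with
  | of_card_le hB =>
    exact hdiff.of_subset Set.sdiff_subset fun σ hσ hd =>
      ⟨hσ, fun hσB => hd.not_ge (hB σ hσB)⟩
  | @of_sdiff B σ τ hσ hτ hστ hd hfree _ ih =>
    have hmem : ∀ η ∈ A, σ ⊆ η → η ∈ B := fun η hη hση => hupper σ hσ η hη hση hd
    refine .of_sdiff (hBA hσ) (hBA hτ) hστ hd (fun η hη hση => hfree η (hmem η hη hση) hση)
      (ih (Set.sdiff_subset_sdiff_left hBA) ?_ ?_)
    · exact fun ρ hρ η hη hρη hcard => ⟨hupper ρ hρ.1 η hη.1 hρη hcard, hη.2⟩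
    · convert hdiff using 1
      ext η
      simp only [Set.mem_sdiff, Set.mem_ofPred_eq]
      have := hmem η
      tauto

theorem FamilyCollapsible.of_familyLink [DecidableEq α] {v : α}
    (hlink : FamilyCollapsible d (familyLink A v))
    (hdel : FamilyCollapsible (d + 1) {σ ∈ A | v ∉ σ}) : FamilyCollapsible (d + 1) A := by
  generalize hL : familyLink A v = L at hlink
  induction hlink generalizing A with
  | of_card_le hcard =>
    subst hL
    refine hdel.of_subset (Set.sep_subset _ _) fun σ hσ hd => ⟨hσ, fun hv => hd.not_ge ?_⟩
    rw [← card_erase_add_one hv]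
    exact Nat.succ_le_succ
      (hcard _ ⟨notMem_erase v σ, by rwa [insert_erase hv]⟩)
  | @of_sdiff L σ τ hσ hτ hστ hd hfree _ ih =>
    subst hL
    have hss : insert v σ ⊂ insert v τ :=
      ⟨insert_subset_insert v hστ.1, fun h => hστ.2 ((insert_subset_insert_iff hτ.1).1 h)⟩
    refine .of_sdiff hσ.2 hτ.2 hss (by rw [card_insert_of_notMem hσ.1]; lia) ?_ (ih ?_ ?_)
    · intro η hη hση
      have hvη : v ∈ η := hση (mem_insert_self v σ)
      rw [← insert_erase hvη]
      refine insert_subset_insert v (hfree _ ⟨notMem_erase v η, by rwa [insert_erase hvη]⟩ ?_)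
      exact subset_erase.2 ⟨(subset_insert v σ).trans hση, hσ.1⟩
    · convert hdel using 1
      ext η
      simp only [Set.mem_sdiff, Set.mem_ofPred_eq]
      have : insert v σ ⊆ η → v ∈ η := fun h => h (mem_insert_self v σ)
      tauto
    · ext η
      simp only [familyLink, Set.mem_sdiff, Set.mem_ofPred_eq, insert_subset_insert_iff hσ.1,
        and_assoc]

end SetFamilies

section Cliques

variable {α : Type*}

/-- The cliques of `G` contained in `N`, including the empty one. -/
def cliqueFamily (G : SimpleGraph α) (N : Finset α) : Set (Finset α) :=
  {σ | σ ⊆ N ∧ G.IsClique σ}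

theorem cliqueFamily_eq_powerset {G : SimpleGraph α} {N : Finset α} (hN : G.IsClique N) :
    cliqueFamily G N = N.powerset := by
  ext σ
  simpa [cliqueFamily] using fun hσ => hN.subset (coe_subset.2 hσ)

theorem familyLink_cliqueFamily [DecidableEq α] (G : SimpleGraph α) [DecidableRel G.Adj]
    {N : Finset α} {v : α} (hv : v ∈ N) :
    familyLink (cliqueFamily G N) v = cliqueFamily G {w ∈ N | G.Adj v w} := by
  ext σ
  simp only [familyLink, cliqueFamily, Set.mem_ofPred_eq, coe_insert, SimpleGraph.isClique_insert,
    mem_coe]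
  grind [SimpleGraph.irrefl]

theorem cliqueFamily_erase [DecidableEq α] (G : SimpleGraph α) (N : Finset α) (v : α) :
    cliqueFamily G (N.erase v) = {σ ∈ cliqueFamily G N | v ∉ σ} := by
  ext σ
  simp only [cliqueFamily, Set.mem_ofPred_eq, subset_erase]
  tauto

theorem familyCollapsible_powerset (N : Finset α) (d : ℕ) :
    FamilyCollapsible d (N.powerset : Set (Finset α)) := by
  classical
  induction N using Finset.induction_on generalizing d with
  | empty => exact .of_card_le (by simp)
  | @insert v N hv ih =>
    cases d with
    | zero =>
      exact .of_sdiff (σ := ∅) (τ := insert v N) (by simp) (by simp)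
        (empty_ssubset.2 (insert_nonempty v N)) le_rfl
        (fun η hη _ => mem_powerset.1 hη) (.of_card_le (by simp))
    | succ d =>
      have hlink : familyLink ((insert v N).powerset : Set (Finset α)) v = N.powerset := by
        ext σ
        simp only [familyLink, Set.mem_ofPred_eq, mem_coe, mem_powerset]
        exact ⟨fun h => (insert_subset_insert_iff h.1).1 h.2,
          fun h => ⟨fun hvσ => hv (h hvσ), insert_subset_insert v h⟩⟩
      have hdel : {σ ∈ ((insert v N).powerset : Set (Finset α)) | v ∉ σ} = N.powerset := by
        ext σ
        simp only [Set.mem_ofPred_eq, mem_coe, mem_powerset]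
        grind
      exact .of_familyLink (v := v) (hlink ▸ ih d) (hdel ▸ ih (d + 1))

theorem familyCollapsible_cliqueFamily (G : SimpleGraph α) {N : Finset α} {d : ℕ}
    (hN : #N ≤ 2 * d + 1) : FamilyCollapsible d (cliqueFamily G N) := by
  classical
  induction hn : #N using Nat.strong_induction_on generalizing N d with
  | _ n ih =>
  by_cases hclique : G.IsClique N
  · exact cliqueFamily_eq_powerset hclique ▸ familyCollapsible_powerset N d
  obtain ⟨u, hu, w, hw, huw, hadj⟩ : ∃ u ∈ N, ∃ w ∈ N, u ≠ w ∧ ¬ G.Adj u w := by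
    simpa [SimpleGraph.IsClique, Set.Pairwise] using hclique
  have hwu : w ∈ N.erase u := mem_erase.2 ⟨huw.symm, hw⟩
  have hnbrs : #{x ∈ N | G.Adj u x} < #(N.erase u) := by
    refine card_lt_card ⟨fun x hx => ?_, fun h => hadj (mem_filter.1 (h hwu)).2⟩
    exact mem_erase.2 ⟨(mem_filter.1 hx).2.ne', (mem_filter.1 hx).1⟩
  have hcard_erase := card_erase_add_one hu
  have hpos := card_pos.2 ⟨w, hwu⟩
  obtain ⟨d, rfl⟩ : ∃ e, d = e + 1 := ⟨d - 1, by lia⟩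
  refine .of_familyLink (v := u) ?_ ?_
  · rw [familyLink_cliqueFamily G hu]
    exact ih _ (by lia) (by lia) rfl
  · rw [← cliqueFamily_erase]
    exact ih _ (by lia) (by lia) rfl

end Cliques

section StrongConnectivity

variable {α : Type*} {d : ℕ} {X A : Set (Finset α)}

/-- The pure `d`-skeleton of `A`: the complex generated by the members of `A` of dimension `d`. -/
def pureSkeleton (A : Set (Finset α)) (d : ℕ) : Set (Finset α) :=
  {σ | σ.Nonempty ∧ ∃ F ∈ A, #F = d + 1 ∧ σ ⊆ F}

theorem mem_pureSkeleton_self {F : Finset α} (hF : F ∈ A) (hFcard : #F = d + 1) :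
    F ∈ pureSkeleton A d :=
  ⟨card_pos.1 (by lia), F, hF, hFcard, subset_rfl⟩

theorem mem_of_mem_pureSkeleton {σ : Finset α} (hσ : σ ∈ pureSkeleton A d) (hσcard : #σ = d + 1) :
    σ ∈ A := by
  obtain ⟨-, F, hF, hFcard, hσF⟩ := hσ
  rwa [eq_of_subset_of_card_le hσF (by lia)]

theorem pureSkeleton_subset (hX : IsComplex X) (hAX : A ⊆ X) (d : ℕ) : pureSkeleton A d ⊆ X := by
  rintro σ ⟨hσ, F, hF, -, hσF⟩
  exact hX.2 F (hAX hF) σ hσF hσ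

theorem IsComparabilityClosed.mem_of_subset (hA : IsComparabilityClosed d X A) (hX : IsComplex X)
    (hAX : A ⊆ X) {σ τ : Finset α} (hτ : τ ∈ A) (hστ : σ ⊆ τ) (hσ : σ.Nonempty) (hd : d ≤ #σ) :
    σ ∈ A :=
  (hA σ (hX.2 τ (hAX hτ) σ hστ hσ) τ (hAX hτ) hστ hd).2 hτ

theorem exists_card_eq_comparable {σ τ : Finset α} (hστ : σ ⊂ τ) (hd : d ≤ #σ) :
    ∃ H ⊆ τ, #H = d + 1 ∧ (H ⊆ σ ∨ σ ⊆ H) := by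
  have hlt := card_lt_card hστ
  obtain hσ | hσ := hd.eq_or_lt
  · obtain ⟨H, hσH, hHτ, hH⟩ := exists_subsuperset_card_eq hστ.subset
      (n := d + 1) (by lia) (by lia)
    exact ⟨H, hHτ, hH, .inr hσH⟩
  · obtain ⟨H, hHσ, hH⟩ := exists_subset_card_eq (Nat.succ_le_of_lt hσ)
    exact ⟨H, hHσ.trans hστ.subset, hH, .inl hHσ⟩

variable [DecidableEq α]

theorem stronglyConnected_powerset (τ : Finset α) (d : ℕ) :
    StronglyConnected (τ.powerset : Set (Finset α)) d := by
  intro F hF G hG hFcard hGcard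
  induction hn : #(G \ F) generalizing F with
  | zero =>
    have hGF : G ⊆ F := sdiff_eq_empty_iff_subset.1 (card_eq_zero.1 hn)
    rw [eq_of_subset_of_card_le hGF (by lia)]
  | succ n ih =>
    obtain ⟨x, hx⟩ : (G \ F).Nonempty := card_pos.1 (by lia)
    obtain ⟨y, hy⟩ : (F \ G).Nonempty := card_pos.1 (by rw [card_sdiff_comm (by lia)]; lia)
    obtain ⟨hxG, hxF⟩ := mem_sdiff.1 hx
    obtain ⟨hyF, hyG⟩ := mem_sdiff.1 hy
    let F' := insert x (F.erase y)
    have hF'card : #F' = d + 1 := by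
      rw [card_insert_of_notMem (fun h => hxF (mem_of_mem_erase h)), card_erase_add_one hyF, hFcard]
    have hF' : F' ⊆ τ := insert_subset (mem_powerset.1 hG hxG)
      ((erase_subset y F).trans (mem_powerset.1 hF))
    have hinter : F ∩ F' = F.erase y := by
      rw [inter_insert_of_notMem hxF, inter_eq_right.2 (erase_subset y F)]
    have hsdiff : G \ F' = (G \ F).erase x := by
      ext z
      have : z = y → z ∉ G := fun h => h ▸ hyG
      simp only [F', mem_sdiff, mem_insert, mem_erase]
      tauto
    refine (ih F' (mem_powerset.2 hF') hF'card ?_).head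
      ⟨hF, mem_powerset.2 hF', hFcard, hF'card, ?_⟩
    · rw [hsdiff, card_erase_of_mem hx, hn, Nat.add_sub_cancel]
    · rw [hinter, card_erase_of_mem hyF, hFcard, Nat.add_sub_cancel]

theorem FacetAdj.mono {F G : Finset α} (h : FacetAdj X d F G)
    (hXA : ∀ σ ∈ X, #σ = d + 1 → σ ∈ A) : FacetAdj A d F G :=
  ⟨hXA F h.1 h.2.2.1, hXA G h.2.1 h.2.2.2.1, h.2.2⟩

theorem facetAdj_of_subset_of_subset {σ F G : Finset α} (hF : F ∈ A) (hG : G ∈ A)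
    (hFcard : #F = d + 1) (hGcard : #G = d + 1) (hFG : F ≠ G) (hσ : d ≤ #σ) (hσF : σ ⊆ F)
    (hσG : σ ⊆ G) : FacetAdj A d F G := by
  have hle : #σ ≤ #(F ∩ G) := card_le_card (subset_inter hσF hσG)
  have hlt : #(F ∩ G) < #F := card_lt_card
    ⟨inter_subset_left, fun h => hFG (eq_of_subset_of_card_le (subset_inter_iff.1 h).2 (by lia))⟩
  exact ⟨hF, hG, hFcard, hGcard, by lia⟩

theorem reflTransGen_facetAdj_of_comparable {τ F G : Finset α} (hF : F ∈ A) (hG : G ∈ A)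
    (hFcard : #F = d + 1) (hGcard : #G = d + 1) (hτ : d ≤ #τ)
    (hτA : ∀ σ ⊆ τ, #σ = d + 1 → σ ∈ A) (hFτ : F ⊆ τ ∨ τ ⊆ F) (hGτ : G ⊆ τ ∨ τ ⊆ G) :
    Relation.ReflTransGen (FacetAdj A d) F G := by
  obtain hτ | hτ := hτ.eq_or_lt
  · have subset_of : ∀ H : Finset α, #H = d + 1 → H ⊆ τ ∨ τ ⊆ H → τ ⊆ H := fun H hH h =>
      h.elim (fun hHτ => by have := card_le_card hHτ; lia) id
    obtain rfl | hFG := eq_or_ne F G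
    · exact .refl
    · exact .single (facetAdj_of_subset_of_subset hF hG hFcard hGcard hFG hτ.le
        (subset_of F hFcard hFτ) (subset_of G hGcard hGτ))
  · have subset_of : ∀ H : Finset α, #H = d + 1 → H ⊆ τ ∨ τ ⊆ H → H ⊆ τ := fun H hH h =>
      h.elim id fun hτH => (eq_of_subset_of_card_le hτH (by lia)).ge
    refine Relation.ReflTransGen.mono (fun _ _ h => ?_) _ _ (stronglyConnected_powerset τ d
      F (mem_powerset.2 (subset_of F hFcard hFτ)) G (mem_powerset.2 (subset_of G hGcard hGτ))
      hFcard hGcard)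
    exact h.mono fun σ hσ => hτA σ (mem_powerset.1 hσ)

theorem stronglyConnected_of_minimal (hX : IsComplex X)
    (hA : Minimal (fun B => B.Nonempty ∧ B ⊆ X ∧ IsComparabilityClosed d X B) A) :
    StronglyConnected A d := by
  obtain ⟨-, hAX, hclosed⟩ := hA.prop
  have mem_of_subset : ∀ τ ∈ A, ∀ σ ⊆ τ, #σ = d + 1 → σ ∈ A := fun τ hτ σ hστ hσ =>
    hclosed.mem_of_subset hX hAX hτ hστ (card_pos.1 (by lia)) (by lia)
  intro F hF G hG hFcard hGcard
  let B := {σ ∈ A | ∀ H ∈ A, #H = d + 1 → (H ⊆ σ ∨ σ ⊆ H) →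
    Relation.ReflTransGen (FacetAdj A d) F H}
  have hFB : F ∈ B := ⟨hF, fun H hH hHcard hHF =>
    reflTransGen_facetAdj_of_comparable hF hH hFcard hHcard (by lia) (mem_of_subset F hF)
      (.inl subset_rfl) hHF⟩
  have mem_of_mem : ∀ σ ∈ B, ∀ τ ∈ A, d ≤ #τ → ∀ H ∈ A, #H = d + 1 → (H ⊆ σ ∨ σ ⊆ H) →
      (H ⊆ τ ∨ τ ⊆ H) → τ ∈ B := fun σ hσ τ hτ hd H hH hHcard hHσ hHτ =>
    ⟨hτ, fun I hI hIcard hIτ => (hσ.2 H hH hHcard hHσ).trans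
      (reflTransGen_facetAdj_of_comparable hH hI hHcard hIcard hd (mem_of_subset τ hτ) hHτ hIτ)⟩
  have hB : IsComparabilityClosed d X B := by
    intro σ hσ τ hτ hστ hd
    obtain rfl | hlt := hστ.eq_or_ssubset
    · rfl
    have hmem := hclosed σ hσ τ hτ hστ hd
    obtain ⟨H, hHτ, hHcard, hHσ⟩ := exists_card_eq_comparable hlt hd
    constructor <;> intro h
    · have hτA := hmem.1 h.1
      exact mem_of_mem σ h τ hτA (hd.trans (card_le_card hστ)) H (mem_of_subset τ hτA H hHτ hHcard)
        hHcard hHσ (.inl hHτ)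
    · exact mem_of_mem τ h σ (hmem.2 h.1) hd H (mem_of_subset τ h.1 H hHτ hHcard)
        hHcard (.inl hHτ) hHσ
  have hBA : B = A :=
    hA.eq_of_subset ⟨⟨F, hFB⟩, (Set.sep_subset _ _).trans hAX, hB⟩ (Set.sep_subset _ _)
  exact (hBA ▸ hG : G ∈ B).2 G hG hGcard (.inl subset_rfl)

theorem isRelevant_pureSkeleton (hX : IsComplex X) (hAX : A ⊆ X) (hA : ∃ F ∈ A, #F = d + 1)
    (hconn : StronglyConnected A d) : IsRelevant X (pureSkeleton A d) d := by
  refine ⟨pureSkeleton_subset hX hAX d, ⟨fun σ hσ => hσ.1, ?_⟩, ⟨?_, ?_⟩, ?_⟩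
  · rintro σ ⟨-, F, hF, hFcard, hσF⟩ τ hτσ hτ
    exact ⟨hτ, F, hF, hFcard, hτσ.trans hσF⟩
  · obtain ⟨F, hF, hFcard⟩ := hA
    exact ⟨F, mem_pureSkeleton_self hF hFcard⟩
  · rintro τ ⟨⟨-, F, hF, hFcard, hτF⟩, hmax⟩
    rw [← hmax F (mem_pureSkeleton_self hF hFcard) hτF, hFcard]
  · intro F hF G hG hFcard hGcard
    exact Relation.ReflTransGen.mono (fun _ _ h => h.mono fun _ => mem_pureSkeleton_self) _ _
      (hconn F (mem_of_mem_pureSkeleton hF hFcard) G (mem_of_mem_pureSkeleton hG hGcard)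
        hFcard hGcard)

end StrongConnectivity

section CliqueComplexes

variable {α : Type*} {d : ℕ} {X A : Set (Finset α)} {v : α}

/-- The graph of a complex, whose edges are the one-dimensional faces. -/
def edgeGraph [DecidableEq α] (X : Set (Finset α)) : SimpleGraph α where
  Adj a b := a ≠ b ∧ {a, b} ∈ X
  symm := ⟨fun a b h => ⟨h.1.symm, pair_comm a b ▸ h.2⟩⟩
  loopless := ⟨fun _ h => h.1 rfl⟩

theorem IsComplex.isClique_edgeGraph [DecidableEq α] (hX : IsComplex X) {σ : Finset α}
    (hσ : σ ∈ X) : (edgeGraph X).IsClique σ :=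
  fun a ha _ hb hab => ⟨hab, hX.2 σ hσ _ (insert_subset ha (singleton_subset_iff.2 hb))
    (insert_nonempty a _)⟩

theorem IsCliqueComplex.mem_of_isClique [DecidableEq α] (hX : IsCliqueComplex X) {σ : Finset α}
    (hσ : σ.Nonempty) (hvert : ∀ a ∈ σ, {a} ∈ X) (hclique : (edgeGraph X).IsClique σ) : σ ∈ X := by
  refine hX.2 σ hσ fun τ hτσ hτ hcard => ?_
  obtain hτ1 | hτ2 : #τ = 1 ∨ #τ = 2 := by have := card_pos.2 hτ; lia
  · obtain ⟨a, rfl⟩ := card_eq_one.1 hτ1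
    exact hvert a (hτσ (mem_singleton_self a))
  · obtain ⟨a, b, hab, rfl⟩ := card_eq_two.1 hτ2
    exact (hclique (hτσ (by simp)) (hτσ (by simp)) hab).2

theorem IsCliqueComplex.deletion (hX : IsCliqueComplex X) (v : α) :
    IsCliqueComplex {σ ∈ X | v ∉ σ} := by
  refine ⟨⟨fun σ hσ => hX.1.1 σ hσ.1, fun σ hσ τ hτσ hτ =>
    ⟨hX.1.2 σ hσ.1 τ hτσ hτ, fun hv => hσ.2 (hτσ hv)⟩⟩, fun σ hσ hsmall => ?_⟩
  refine ⟨hX.2 σ hσ fun τ hτσ hτ hcard => (hsmall τ hτσ hτ hcard).1, fun hv => ?_⟩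
  exact (hsmall {v} (singleton_subset_iff.2 hv) (singleton_nonempty v) (by simp)).2
    (mem_singleton_self v)

theorem IsComparabilityClosed.deletion (hA : IsComparabilityClosed d X A) (v : α) :
    IsComparabilityClosed d {σ ∈ X | v ∉ σ} {σ ∈ A | v ∉ σ} :=
  fun σ hσ τ hτ hστ hd => and_congr (hA σ hσ.1 τ hτ.1 hστ hd) (iff_of_true hσ.2 hτ.2)

variable [DecidableEq α]

theorem IsCliqueComplex.insert_mem_of_isClique (hX : IsCliqueComplex X) {σ : Finset α}
    (hσ : (edgeGraph X).IsClique σ) (hv : {v} ∈ X) (hedge : ∀ w ∈ σ, {v, w} ∈ X) :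
    insert v σ ∈ X := by
  refine hX.mem_of_isClique (insert_nonempty v σ) ?_ ?_
  · refine (forall_mem_insert _ _ _).2 ⟨hv, fun w hw => ?_⟩
    exact hX.1.2 _ (hedge w hw) _ (by simp) (singleton_nonempty w)
  · rw [coe_insert, SimpleGraph.isClique_insert]
    exact ⟨hσ, fun w hw hvw => ⟨hvw, hedge w hw⟩⟩

theorem finite_setOf_pair_mem {S : Set (Finset α)} (hS : S.Finite) (v : α) :
    {w | w ≠ v ∧ {v, w} ∈ S}.Finite :=
  (hS.biUnion fun σ _ => σ.finite_toSet).subset fun w hw =>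
    Set.mem_biUnion hw.2 (by simp)

theorem familyCollapsible_familyLink (hX : IsCliqueComplex X) (hfin : X.Finite) (hAX : A ⊆ X)
    (hA : IsComparabilityClosed (d + 1) X A) (hv : {v} ∈ X)
    (hdeg : degreeIn (pureSkeleton A (d + 1)) v ≤ 2 * d + 1) :
    FamilyCollapsible d (familyLink A v) := by
  have hskel : pureSkeleton A (d + 1) ⊆ X := pureSkeleton_subset hX.1 hAX (d + 1)
  have hNfin := finite_setOf_pair_mem (hfin.subset hskel) v
  let N := hNfin.toFinset
  have mem_N : ∀ w, w ∈ N ↔ w ≠ v ∧ {v, w} ∈ pureSkeleton A (d + 1) := fun w =>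
    hNfin.mem_toFinset
  have hNcard : #N ≤ 2 * d + 1 := (Set.ncard_eq_toFinset_card _ hNfin).symm.trans_le hdeg
  have hvN : v ∉ N := fun h => ((mem_N v).1 h).1 rfl
  have insert_mem : ∀ σ ∈ cliqueFamily (edgeGraph X) N, insert v σ ∈ X := by
    rintro σ ⟨hσN, hσ⟩
    exact hX.insert_mem_of_isClique hσ hv fun w hw => hskel ((mem_N w).1 (hσN hw)).2
  refine (familyCollapsible_cliqueFamily (edgeGraph X) hNcard).of_isComparabilityClosed ?_ ?_
  · intro σ hσ τ hτ hστ hd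
    have hvσ : v ∉ σ := fun h => hvN (hσ.1 h)
    refine and_congr (iff_of_true hvσ fun h => hvN (hτ.1 h)) (hA _ (insert_mem σ hσ) _
      (insert_mem τ hτ) (insert_subset_insert v hστ) ?_)
    rw [card_insert_of_notMem hvσ]
    exact Nat.succ_le_succ hd
  · rintro σ ⟨hvσ, hσA⟩ hd
    refine ⟨fun w hw => (mem_N w).2 ⟨fun h => hvσ (h ▸ hw), insert_nonempty v _, ?_⟩,
      (hX.1.isClique_edgeGraph (hAX hσA)).subset (coe_subset.2 (subset_insert v σ))⟩
    obtain ⟨F, hvwF, hFσ, hF⟩ := exists_subsuperset_card_eq (n := d + 1 + 1)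
      (insert_subset_insert v (singleton_subset_iff.2 hw))
      (card_le_two.trans (by lia)) (by rw [card_insert_of_notMem hvσ]; lia)
    exact ⟨F, hA.mem_of_subset hX.1 hAX hσA hFσ (card_pos.1 (by lia)) (by lia), hF, hvwF⟩

theorem exists_familyCollapsible_familyLink {k : ℕ} (hX : IsCliqueComplex X) (hfin : X.Finite)
    (hdeg : ∀ S, IsRelevant X S (k + 1) → ∃ v, {v} ∈ S ∧ degreeIn S v ≤ 2 * k + 1)
    (hA : Minimal (fun B => B.Nonempty ∧ B ⊆ X ∧ IsComparabilityClosed (k + 1) X B) A)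
    (hlarge : ∃ F ∈ A, #F = k + 2) :
    ∃ v, (∃ F ∈ A, v ∈ F) ∧ FamilyCollapsible k (familyLink A v) := by
  obtain ⟨-, hAX, hclosed⟩ := hA.prop
  have hrelevant : IsRelevant X (pureSkeleton A (k + 1)) (k + 1) :=
    isRelevant_pureSkeleton hX.1 hAX hlarge (stronglyConnected_of_minimal hX.1 hA)
  obtain ⟨v, hv, hvdeg⟩ := hdeg _ hrelevant
  have hvX := hrelevant.1 hv
  obtain ⟨-, F, hF, -, hvF⟩ := hv
  exact ⟨v, ⟨F, hF, singleton_subset_iff.1 hvF⟩,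
    familyCollapsible_familyLink hX hfin hAX hclosed hvX hvdeg⟩

theorem familyCollapsible_of_degree_condition {k : ℕ} (hX : IsCliqueComplex X) (hfin : X.Finite)
    (hdeg : ∀ S, IsRelevant X S (k + 1) → ∃ v, {v} ∈ S ∧ degreeIn S v ≤ 2 * k + 1)
    (hAX : A ⊆ X) (hA : IsComparabilityClosed (k + 1) X A) : FamilyCollapsible (k + 1) A := by
  induction hn : A.ncard using Nat.strong_induction_on generalizing X A with
  | _ n ih =>
  have ncard_lt : ∀ B ⊂ A, B.ncard < n := fun B hB =>
    hn ▸ Set.ncard_lt_ncard hB (hfin.subset hAX)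
  by_cases hsmall : ∀ σ ∈ A, #σ ≤ k + 1
  · exact .of_card_le hsmall
  have hlarge : ∃ F ∈ A, #F = k + 2 := by
    push Not at hsmall
    obtain ⟨σ, hσ, hσcard⟩ := hsmall
    obtain ⟨F, hFσ, hF⟩ := exists_subset_card_eq (Nat.succ_le_of_lt hσcard)
    exact ⟨F, hA.mem_of_subset hX.1 hAX hσ hFσ (card_pos.1 (by lia)) (by lia), hF⟩
  by_cases hmin : Minimal (fun B => B.Nonempty ∧ B ⊆ X ∧ IsComparabilityClosed (k + 1) X B) A
  · obtain ⟨v, ⟨F, hF, hvF⟩, hlink⟩ := exists_familyCollapsible_familyLink hX hfin hdeg hmin hlarge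
    have hdelX : {σ ∈ X | v ∉ σ} ⊆ X := Set.sep_subset _ _
    have hdelA : {σ ∈ A | v ∉ σ} ⊂ A :=
      ⟨Set.sep_subset _ _, fun h => (h hF).2 hvF⟩
    exact .of_familyLink hlink (ih _ (ncard_lt _ hdelA) (hX.deletion v) (hfin.subset hdelX)
      (fun S hS => hdeg S ⟨hS.1.trans hdelX, hS.2⟩) (fun σ hσ => ⟨hAX hσ.1, hσ.2⟩)
      (hA.deletion v) rfl)
  · have hAne : A.Nonempty := hlarge.imp fun F hF => hF.1
    obtain ⟨B, hBA, ⟨σ, hσ⟩, hBX, hB⟩ := exists_lt_of_not_minimal ⟨hAne, hAX, hA⟩ hmin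
    have hdiff : A \ B ⊂ A := Set.sdiff_ssubset_left_iff.2 ⟨σ, hBA.1 hσ, hσ⟩
    exact .of_upperClosed_of_sdiff (ih _ (ncard_lt B hBA) hX hfin hdeg hBX hB rfl) hBA.1
      (fun σ hσ τ hτ hστ hd => (hB σ (hBX hσ) τ (hAX hτ) hστ hd).1 hσ)
      (ih _ (ncard_lt _ hdiff) hX hfin hdeg (Set.sdiff_subset.trans hAX) (hA.sdiff hB) rfl)

end CliqueComplexes

/-- If every strongly connected, pure `(k+1)`-dimensional subcomplex `S`
of a finite clique complex `X` contains a vertex of degree at most `2k + 1` in `S`, then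
`X` is `(k+1)`-collapsible. -/
theorem cliqueComplex_collapsible_of_degree_condition {V : Type*} [DecidableEq V]
    (k : ℕ) (X : Set (Finset V)) (hX : IsCliqueComplex X) (hfin : X.Finite)
    (hdeg : ∀ S : Set (Finset V), S ⊆ X → IsComplex S → IsPure S (k + 1) →
      StronglyConnected S (k + 1) →
      ∃ v : V, ({v} : Finset V) ∈ S ∧ degreeIn S v ≤ 2 * k + 1) :
    Collapsible (k + 1) X := by
  have hdeg' : ∀ S, IsRelevant X S (k + 1) → ∃ v, {v} ∈ S ∧ degreeIn S v ≤ 2 * k + 1 :=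
    fun S hS => hdeg S hS.1 hS.2.1 hS.2.2.1 hS.2.2.2
  exact (familyCollapsible_of_degree_condition hX hfin hdeg' subset_rfl
    (isComparabilityClosed_self (k + 1) X)).collapsible
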